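/- For λ > −1, t ∈ ℝ and integer m ≥ 2, let 𝒜_n(t) = det[μ_{2(i+j)}(t;λ,m)]_{i,j=0}^{n−1} and ℬ_n(t) = det[μ_{2(i+j)+2}(t;λ,m)]_{i,j=0}^{n−1} (with 𝒜₀ = ℬ₀ = 1) be the Hankel determinants of even moments of the generalised higher order Freud weight. Then 𝒜_n(t) = Wr(μ₀, dμ₀/dt, …, d^{n−1}μ₀/dt^{n−1})(t), ℬ_n(t) = Wr(dμ₀/dt, d²μ₀/dt², …, d^nμ₀/dt^n)(t), and the recurrence coefficients satisfy β_{2n}(t;λ) = (d/dt) ln( ℬ_n(t)/𝒜_n(t) ) and β_{2n+1}(t;λ) = (d/dt) ln( 𝒜_{n+1}(t)/ℬ_n(t) ). -/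

import Mathlib

open MeasureTheory Real Polynomial

/-- The generalised higher order Freud weight `ω(x;t,λ) = |x|^{2λ+1} exp(t x² − x^{2m})`. -/
noncomputable def freudWeight (m : ℕ) (lam t x : ℝ) : ℝ :=
  |x| ^ (2 * lam + 1) * Real.exp (t * x ^ 2 - x ^ (2 * m))

/-- The `k`-th moment `μ_k(t;λ,m)` of the generalised higher order Freud weight. -/
noncomputable def freudMoment (m : ℕ) (lam : ℝ) (k : ℕ) (t : ℝ) : ℝ :=
  ∫ x : ℝ, x ^ k * freudWeight m lam t x

/-- The Hankel determinant `𝒜_n(t) = det[μ_{2(i+j)}(t;λ,m)]_{i,j=0}^{n−1}`. -/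
noncomputable def hankelA (m : ℕ) (lam : ℝ) (n : ℕ) (t : ℝ) : ℝ :=
  Matrix.det (Matrix.of fun i j : Fin n => freudMoment m lam (2 * ((i : ℕ) + (j : ℕ))) t)

/-- The Hankel determinant `ℬ_n(t) = det[μ_{2(i+j)+2}(t;λ,m)]_{i,j=0}^{n−1}`. -/
noncomputable def hankelB (m : ℕ) (lam : ℝ) (n : ℕ) (t : ℝ) : ℝ :=
  Matrix.det (Matrix.of fun i j : Fin n => freudMoment m lam (2 * ((i : ℕ) + (j : ℕ)) + 2) t)

/-!
Write `⟨p⟩ₜ = ∫ p(x) ω(x;t,λ) dx` and `hₙ(t) = ⟨Pₙ²⟩ₜ`. Since `∂ₜω = x²ω`, the moments satisfy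
`μₖ' = μₖ₊₂`, which gives the two Wronskian formulas. As `Pₙ` minimises `⟨q²⟩ₜ` among the monic `q`
of degree `n`, the variation of `Pₙ` with `t` does not contribute to the derivative of `hₙ`, so
`hₙ' = ⟨x²Pₙ²⟩ₜ = (βₙ₊₁ + βₙ)hₙ` with `β₀ = 0`. Finally `P₂ₖ(x)` and `P₂ₖ₊₁(x)/x` are polynomials in
`x²`, orthogonal for the functionals with moments `μ₂ₖ` and `μ₂ₖ₊₂`; hence `𝒜ₙ = h₀h₂⋯h₂ₙ₋₂` and
`ℬₙ = h₁h₃⋯h₂ₙ₋₁`, and the logarithmic derivatives of the quotients telescope.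
-/

section OrthogonalPolynomials

variable {R : Type*} [CommRing R]

/-- The Hankel determinant `det[c_{i+j}]_{i,j=0}^{n−1}` of a sequence `c`. -/
def hankelDet (c : ℕ → R) (n : ℕ) : R :=
  Matrix.det (Matrix.of fun i j : Fin n => c (i + j))

/-- The linear functional on polynomials with moments `c`, that is, with `X ^ k ↦ c k`. -/
noncomputable def momentFunctional (c : ℕ → R) : R[X] →ₗ[R] R :=
  lsum fun k => c k • LinearMap.id

/-- Positive definiteness of the moment functional `L`, as the bilinear form
`(p, q) ↦ L (p * q)`. -/
def IsPositiveDefinite [PartialOrder R] (L : R[X] →ₗ[R] R) : Prop :=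
  ∀ p : R[X], p ≠ 0 → 0 < L (p * p)

/-- `P` is the sequence of monic orthogonal polynomials of the moment functional `L`. -/
structure IsMonicOrthogonal (L : R[X] →ₗ[R] R) (P : ℕ → R[X]) : Prop where
  monic : ∀ n, (P n).Monic
  natDegree_eq : ∀ n, (P n).natDegree = n
  map_mul_eq_zero : ∀ {j k}, j ≠ k → L (P j * P k) = 0

/-- `P` satisfies the three-term recurrence `P_{n+1} = X P_n − b_n P_{n−1}` of orthogonal
polynomials for an even weight. The convention `P_{−1} = 0` is encoded by `b_0 = 0`, since
`n - 1 = 0` at `n = 0`. -/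
structure IsSymmetricRecurrence (P : ℕ → R[X]) (b : ℕ → R) : Prop where
  zero : P 0 = 1
  coeff_zero : b 0 = 0
  X_mul : ∀ n, X * P n = P (n + 1) + C (b n) * P (n - 1)

variable {L : R[X] →ₗ[R] R} {P : ℕ → R[X]} {b : ℕ → R}

theorem momentFunctional_X_pow (c : ℕ → R) (k : ℕ) : momentFunctional c (X ^ k) = c k := by
  simp [momentFunctional, ← monomial_one_right_eq_X_pow]

theorem map_C_mul (L : R[X] →ₗ[R] R) (a : R) (p : R[X]) : L (C a * p) = a * L p := by
  rw [← smul_eq_C_mul, map_smul, smul_eq_mul]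

theorem map_mul_eq_sum_coeff (L : R[X] →ₗ[R] R) {p q : R[X]} {n : ℕ} (hp : p.natDegree < n)
    (hq : q.natDegree < n) :
    L (p * q) = ∑ j : Fin n, (∑ i : Fin n, p.coeff i * L (X ^ (i + j : ℕ))) * q.coeff j := by
  have hterm (a b : R) (i j : ℕ) :
      L (C a * X ^ i * (C b * X ^ j)) = a * L (X ^ (i + j)) * b := by
    rw [show C a * X ^ i * (C b * X ^ j) = C (a * b) * X ^ (i + j) by rw [C_mul, pow_add]; ring,
      map_C_mul, mul_right_comm]
  rw [Finset.sum_congr rfl fun j _ => Finset.sum_mul .., Finset.sum_comm]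
  conv_lhs => rw [as_sum_range_C_mul_X_pow' p hp, as_sum_range_C_mul_X_pow' q hq]
  simp only [Finset.sum_range, Finset.sum_mul_sum, map_sum, hterm]

namespace IsMonicOrthogonal

theorem map_mul_eq_zero_of_degree_lt (h : IsMonicOrthogonal L P) {n : ℕ} {q : R[X]}
    (hq : q.degree < n) : L (P n * q) = 0 := by
  nontriviality R
  let S : Sequence R :=
    ⟨P, fun i => by rw [degree_eq_natDegree (h.monic i).ne_zero, h.natDegree_eq]⟩
  have hspan : q ∈ Submodule.span R (P '' Set.Iio n) := by
    rw [S.span_degreeLT fun i _ => (h.monic i).leadingCoeff.symm ▸ isUnit_one]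
    exact mem_degreeLT.2 hq
  have hle : Submodule.span R (P '' Set.Iio n) ≤ LinearMap.ker (L ∘ₗ LinearMap.mulLeft R (P n)) :=
    Submodule.span_le.2 <| Set.forall_mem_image.2 fun _ hj => h.map_mul_eq_zero (ne_of_gt hj)
  exact hle hspan

theorem hankelDet_eq_prod (h : IsMonicOrthogonal L P) (n : ℕ) :
    hankelDet (fun k => L (X ^ k)) n = ∏ k ∈ Finset.range n, L (P k * P k) := by
  let H : Matrix (Fin n) (Fin n) R := Matrix.of fun i j => L (X ^ (i + j : ℕ))
  let T : Matrix (Fin n) (Fin n) R := Matrix.of fun i j => (P j).coeff i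
  have hT : T.det = 1 :=
    Matrix.det_matrixOfPolynomials (fun j : Fin n => P j) (fun _ => h.natDegree_eq _)
      fun _ => h.monic _
  have hdiag : T.transpose * H * T = Matrix.diagonal fun k : Fin n => L (P k * P k) := by
    ext k l
    have hentry : (T.transpose * H * T) k l = L (P k * P l) := by
      rw [map_mul_eq_sum_coeff L (n := n) (by simp [h.natDegree_eq]) (by simp [h.natDegree_eq])]
      rfl
    rw [hentry, Matrix.diagonal_apply]
    split_ifs with hkl
    · rw [hkl]
    · exact h.map_mul_eq_zero (Fin.val_ne_of_ne hkl)
  calc hankelDet (fun k => L (X ^ k)) n = (T.transpose * H * T).det := by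
        rw [Matrix.det_mul, Matrix.det_mul, Matrix.det_transpose, hT, one_mul, mul_one]; rfl
    _ = ∏ k ∈ Finset.range n, L (P k * P k) := by
        rw [hdiag, Matrix.det_diagonal, Finset.prod_range]

section Order

variable [PartialOrder R]

theorem map_mul_self_pos [Nontrivial R] (h : IsMonicOrthogonal L P) (hL : IsPositiveDefinite L)
    (n : ℕ) : 0 < L (P n * P n) :=
  hL _ (h.monic n).ne_zero

theorem map_mul_self_le [IsOrderedAddMonoid R] (h : IsMonicOrthogonal L P)
    (hL : IsPositiveDefinite L) {n : ℕ} {q : R[X]} (hq : q.Monic) (hqn : q.natDegree = n) :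
    L (P n * P n) ≤ L (q * q) := by
  nontriviality R
  have hPdeg : (P n).degree = n := by rw [degree_eq_natDegree (h.monic n).ne_zero, h.natDegree_eq]
  have hqdeg : q.degree = n := by rw [degree_eq_natDegree hq.ne_zero, hqn]
  have hr : (q - P n).degree < n :=
    hqdeg ▸ degree_sub_lt_left (hqdeg.trans hPdeg.symm) hq.ne_zero
      (hq.leadingCoeff.trans (h.monic n).leadingCoeff.symm)
  obtain ⟨r, rfl⟩ : ∃ r, q = P n + r := ⟨q - P n, (add_sub_cancel _ _).symm⟩
  rw [add_sub_cancel_left] at hr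
  have hrr : 0 ≤ L (r * r) := by
    rcases eq_or_ne r 0 with rfl | hr0
    · simp
    · exact (hL r hr0).le
  calc L (P n * P n) ≤ L (P n * P n) + L (r * r) := le_add_of_nonneg_right hrr
    _ = L (P n * P n) + L (P n * r) + L (P n * r) + L (r * r) := by
        rw [h.map_mul_eq_zero_of_degree_lt hr]; ring
    _ = L ((P n + r) * (P n + r)) := by
        simp only [← map_add]; congr 1; ring

end Order

theorem map_X_sq_mul_self (h : IsMonicOrthogonal L P) (hb : IsSymmetricRecurrence P b) (n : ℕ) :
    L (X ^ 2 * (P n * P n)) = (b (n + 1) + b n) * L (P n * P n) := by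
  have hnext : X * P (n + 1) = P (n + 2) + C (b (n + 1)) * P n := hb.X_mul (n + 1)
  have hsq : X ^ 2 * (P n * P n) =
      P (n + 2) * P n + C (b (n + 1)) * (P n * P n) + C (b n) * (X * P (n - 1) * P n) := by
    linear_combination X * P n * hb.X_mul n + P n * hnext
  have hprev : b n * L (X * P (n - 1) * P n) = b n * L (P n * P n) := by
    cases n with
    | zero => simp [hb.coeff_zero]
    | succ n =>
      rw [Nat.add_sub_cancel, hb.X_mul, add_mul, mul_assoc, map_add, map_C_mul,
        h.map_mul_eq_zero (by omega : n - 1 ≠ n + 1), mul_zero, add_zero]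
  rw [hsq, map_add, map_add, map_C_mul, map_C_mul, hprev,
    h.map_mul_eq_zero (by omega : n + 2 ≠ n)]
  ring

theorem of_expand (h : IsMonicOrthogonal L P) {Q : ℕ → R[X]}
    (hQ : ∀ k, P (2 * k) = expand R 2 (Q k)) :
    IsMonicOrthogonal (L ∘ₗ (expand R 2).toLinearMap) Q where
  monic k := by simpa only [hQ, monic_expand_iff two_pos] using h.monic (2 * k)
  natDegree_eq k := by
    have hdeg := h.natDegree_eq (2 * k)
    rw [hQ, natDegree_expand] at hdeg
    omega
  map_mul_eq_zero {j k} hjk := by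
    simpa [hQ] using h.map_mul_eq_zero (by omega : 2 * j ≠ 2 * k)

theorem of_X_mul_expand (h : IsMonicOrthogonal L P) {Q : ℕ → R[X]}
    (hQ : ∀ k, P (2 * k + 1) = X * expand R 2 (Q k)) :
    IsMonicOrthogonal (L ∘ₗ LinearMap.mulLeft R (X ^ 2) ∘ₗ (expand R 2).toLinearMap) Q := by
  have hmonic k : (expand R 2 (Q k)).Monic :=
    monic_X.of_mul_monic_left (hQ k ▸ h.monic (2 * k + 1))
  refine ⟨fun k => (monic_expand_iff two_pos).1 (hmonic k), fun k => ?_, fun {j k} hjk => ?_⟩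
  · have hdeg := h.natDegree_eq (2 * k + 1)
    have : Nontrivial R := by
      by_contra hR
      rw [not_nontrivial_iff_subsingleton] at hR
      simp [natDegree_of_subsingleton] at hdeg
    rw [hQ, monic_X.natDegree_mul (hmonic k), natDegree_expand, natDegree_X] at hdeg
    omega
  · rw [← h.map_mul_eq_zero (by omega : 2 * j + 1 ≠ 2 * k + 1), hQ, hQ]
    simp only [LinearMap.comp_apply, AlgHom.toLinearMap_apply, LinearMap.mulLeft_apply, map_mul]
    congr 1
    ring

end IsMonicOrthogonal

namespace IsSymmetricRecurrence

theorem of_three_term (h0 : P 0 = 1) (h1 : P 1 = X)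
    (hP : ∀ n, 1 ≤ n → P (n + 1) = X * P n - C (b n) * P (n - 1)) :
    IsSymmetricRecurrence P (Function.update b 0 0) where
  zero := h0
  coeff_zero := Function.update_self ..
  X_mul n := by
    rcases Nat.eq_zero_or_pos n with rfl | hn
    · simp [h0, h1]
    · rw [Function.update_of_ne hn.ne', hP n hn, sub_add_cancel]

theorem exists_eq_expand (h : IsSymmetricRecurrence P b) (k : ℕ) :
    (∃ Q, P (2 * k) = expand R 2 Q) ∧ ∃ Q, P (2 * k + 1) = X * expand R 2 Q := by
  have hnext n : P (n + 2) = X * P (n + 1) - C (b (n + 1)) * P n :=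
    eq_sub_of_add_eq (h.X_mul (n + 1)).symm
  induction k with
  | zero =>
    have h1 : X * P 0 = P 1 := by simpa [h.coeff_zero] using h.X_mul 0
    exact ⟨⟨1, by simp [h.zero]⟩, 1, by simp [← h1, h.zero]⟩
  | succ k ih =>
    obtain ⟨⟨E, hE⟩, O, hO⟩ := ih
    have heven : P (2 * k + 2) = expand R 2 (X * O - C (b (2 * k + 1)) * E) := by
      rw [hnext, hO, hE]
      simp only [map_sub, map_mul, expand_X, expand_C]
      ring
    refine ⟨⟨_, heven⟩, X * O - C (b (2 * k + 1)) * E - C (b (2 * k + 2)) * O, ?_⟩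
    rw [map_sub, ← heven, mul_add, mul_one, hnext, hO]
    simp only [map_mul, expand_C]
    ring

end IsSymmetricRecurrence

theorem hankelDet_even_moments (h : IsMonicOrthogonal L P) (hb : IsSymmetricRecurrence P b)
    (n : ℕ) :
    hankelDet (fun k => L (X ^ (2 * k))) n = ∏ k ∈ Finset.range n, L (P (2 * k) * P (2 * k)) := by
  choose Q hQ using fun k => (hb.exists_eq_expand k).1
  simpa [hQ, pow_mul] using (h.of_expand hQ).hankelDet_eq_prod n

theorem hankelDet_shifted_even_moments (h : IsMonicOrthogonal L P)
    (hb : IsSymmetricRecurrence P b) (n : ℕ) :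
    hankelDet (fun k => L (X ^ (2 * k + 2))) n =
      ∏ k ∈ Finset.range n, L (P (2 * k + 1) * P (2 * k + 1)) := by
  choose Q hQ using fun k => (hb.exists_eq_expand k).2
  have hsq k : P (2 * k + 1) * P (2 * k + 1) = X ^ 2 * expand R 2 (Q k * Q k) := by
    rw [hQ, map_mul]; ring
  have hpow k : (X : R[X]) ^ (2 * k + 2) = X ^ 2 * (X ^ 2) ^ k := by ring
  simpa [hsq, hpow] using (h.of_X_mul_expand hQ).hankelDet_eq_prod n

section Order

variable [PartialOrder R] [IsStrictOrderedRing R]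

theorem hankelDet_even_moments_pos (hL : IsPositiveDefinite L) (h : IsMonicOrthogonal L P)
    (hb : IsSymmetricRecurrence P b) (n : ℕ) : 0 < hankelDet (fun k => L (X ^ (2 * k))) n := by
  rw [hankelDet_even_moments h hb]
  exact Finset.prod_pos fun k _ => h.map_mul_self_pos hL _

theorem hankelDet_shifted_even_moments_pos (hL : IsPositiveDefinite L) (h : IsMonicOrthogonal L P)
    (hb : IsSymmetricRecurrence P b) (n : ℕ) : 0 < hankelDet (fun k => L (X ^ (2 * k + 2))) n := by
  rw [hankelDet_shifted_even_moments h hb]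
  exact Finset.prod_pos fun k _ => h.map_mul_self_pos hL _

end Order

end OrthogonalPolynomials

theorem sum_range_two_mul {A : Type*} [AddCommMonoid A] (f : ℕ → A) (n : ℕ) :
    ∑ j ∈ Finset.range (2 * n), f j = ∑ k ∈ Finset.range n, (f (2 * k) + f (2 * k + 1)) := by
  induction n with
  | zero => simp
  | succ n ih => rw [mul_add_one, Finset.sum_range_succ, Finset.sum_range_succ, ih,
      Finset.sum_range_succ _ n, add_assoc]

section Deformation

theorem hasDerivAt_functional {𝕜 : Type*} [NontriviallyNormedField 𝕜] {L : 𝕜 → 𝕜[X] →ₗ[𝕜] 𝕜}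
    {M : 𝕜[X] →ₗ[𝕜] 𝕜} {t : 𝕜} (hL : ∀ k, HasDerivAt (fun s => L s (X ^ k)) (M (X ^ k)) t)
    (p : 𝕜[X]) : HasDerivAt (fun s => L s p) (M p) t := by
  induction p using Polynomial.induction_on' with
  | add p q hp hq => simpa only [map_add] using hp.fun_add hq
  | monomial k a => simpa only [← C_mul_X_pow_eq_monomial, map_C_mul] using (hL k).const_mul a

theorem differentiableAt_hankelDet {𝕜 : Type*} [NontriviallyNormedField 𝕜] {c : ℕ → 𝕜 → 𝕜} {t : 𝕜}
    (hc : ∀ k, DifferentiableAt 𝕜 (c k) t) (n : ℕ) :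
    DifferentiableAt 𝕜 (fun s => hankelDet (fun k => c k s) n) t := by
  simp only [hankelDet, Matrix.det_apply, Matrix.of_apply]
  exact DifferentiableAt.fun_sum fun σ _ =>
    (DifferentiableAt.fun_finsetProd fun i _ => hc _).const_smul _

variable {L : ℝ → ℝ[X] →ₗ[ℝ] ℝ} {P : ℝ → ℕ → ℝ[X]} {b : ℝ → ℕ → ℝ} {t : ℝ}

theorem differentiableAt_map_mul_self (hpos : ∀ s, IsPositiveDefinite (L s))
    (hP : ∀ s, IsMonicOrthogonal (L s) (P s))
    (hL : ∀ k, DifferentiableAt ℝ (fun s => L s (X ^ k)) t) (n : ℕ) :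
    DifferentiableAt ℝ (fun s => L s (P s n * P s n)) t := by
  let D (n : ℕ) (s : ℝ) : ℝ := hankelDet (fun k => L s (X ^ k)) n
  have hD n s : D n s ≠ 0 := by
    simp only [D, (hP s).hankelDet_eq_prod]
    exact Finset.prod_ne_zero_iff.2 fun k _ => ((hP s).map_mul_self_pos (hpos s) k).ne'
  have hquot : (fun s => L s (P s n * P s n)) = fun s => D (n + 1) s / D n s := by
    ext s
    rw [eq_div_iff (hD n s)]
    simp only [D, (hP s).hankelDet_eq_prod, Finset.prod_range_succ, mul_comm]
  rw [hquot]
  exact (differentiableAt_hankelDet hL _).fun_div (differentiableAt_hankelDet hL _) (hD n t)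

theorem hasDerivAt_map_mul_self {M : ℝ[X] →ₗ[ℝ] ℝ} (hpos : ∀ s, IsPositiveDefinite (L s))
    (hP : ∀ s, IsMonicOrthogonal (L s) (P s))
    (hL : ∀ k, HasDerivAt (fun s => L s (X ^ k)) (M (X ^ k)) t) (n : ℕ) :
    HasDerivAt (fun s => L s (P s n * P s n)) (M (P t n * P t n)) t := by
  have hfixed := hasDerivAt_functional hL (P t n * P t n)
  have hnorm :=
    (differentiableAt_map_mul_self hpos hP (fun k => (hL k).differentiableAt) n).hasDerivAt
  have hmin : IsLocalMin (fun s => L s (P t n * P t n) - L s (P s n * P s n)) t := by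
    refine Filter.Eventually.of_forall fun s => ?_
    simpa using (hP s).map_mul_self_le (hpos s) ((hP t).monic n) ((hP t).natDegree_eq n)
  exact hnorm.congr_deriv (sub_eq_zero.1 (hmin.hasDerivAt_eq_zero (hfixed.fun_sub hnorm))).symm

theorem hasDerivAt_log_map_mul_self (hpos : ∀ s, IsPositiveDefinite (L s))
    (hP : ∀ s, IsMonicOrthogonal (L s) (P s)) (hb : IsSymmetricRecurrence (P t) (b t))
    (hL : ∀ k, HasDerivAt (fun s => L s (X ^ k)) (L t (X ^ (k + 2))) t) (n : ℕ) :
    HasDerivAt (fun s => log (L s (P s n * P s n))) (b t (n + 1) + b t n) t := by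
  have hL' k : HasDerivAt (fun s => L s (X ^ k))
      ((L t ∘ₗ LinearMap.mulLeft ℝ (X ^ 2)) (X ^ k)) t := by
    simpa [← pow_add, add_comm 2] using hL k
  have hne : L t (P t n * P t n) ≠ 0 := ((hP t).map_mul_self_pos (hpos t) n).ne'
  refine ((hasDerivAt_map_mul_self hpos hP hL' n).log hne).congr_deriv ?_
  rw [LinearMap.comp_apply, LinearMap.mulLeft_apply, (hP t).map_X_sq_mul_self hb,
    mul_div_cancel_right₀ _ hne]

theorem hasDerivAt_log_hankelDet_even_moments (hpos : ∀ s, IsPositiveDefinite (L s))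
    (hP : ∀ s, IsMonicOrthogonal (L s) (P s)) (hb : ∀ s, IsSymmetricRecurrence (P s) (b s))
    (hL : ∀ k, HasDerivAt (fun s => L s (X ^ k)) (L t (X ^ (k + 2))) t) (n : ℕ) :
    HasDerivAt (fun s => log (hankelDet (fun k => L s (X ^ (2 * k))) n))
      (∑ j ∈ Finset.range (2 * n), b t j) t := by
  have hlog s : log (hankelDet (fun k => L s (X ^ (2 * k))) n) =
      ∑ k ∈ Finset.range n, log (L s (P s (2 * k) * P s (2 * k))) := by
    rw [hankelDet_even_moments (hP s) (hb s), log_prod fun k _ =>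
      ((hP s).map_mul_self_pos (hpos s) _).ne']
  simp only [hlog, sum_range_two_mul, add_comm (b t (2 * _))]
  exact HasDerivAt.fun_sum fun k _ => hasDerivAt_log_map_mul_self hpos hP (hb t) hL (2 * k)

theorem hasDerivAt_log_hankelDet_shifted_even_moments (hpos : ∀ s, IsPositiveDefinite (L s))
    (hP : ∀ s, IsMonicOrthogonal (L s) (P s)) (hb : ∀ s, IsSymmetricRecurrence (P s) (b s))
    (hL : ∀ k, HasDerivAt (fun s => L s (X ^ k)) (L t (X ^ (k + 2))) t) (n : ℕ) :
    HasDerivAt (fun s => log (hankelDet (fun k => L s (X ^ (2 * k + 2))) n))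
      (∑ j ∈ Finset.range (2 * n + 1), b t j) t := by
  have hlog s : log (hankelDet (fun k => L s (X ^ (2 * k + 2))) n) =
      ∑ k ∈ Finset.range n, log (L s (P s (2 * k + 1) * P s (2 * k + 1))) := by
    rw [hankelDet_shifted_even_moments (hP s) (hb s), log_prod fun k _ =>
      ((hP s).map_mul_self_pos (hpos s) _).ne']
  simp only [hlog, Finset.sum_range_succ', (hb t).coeff_zero, add_zero, sum_range_two_mul,
    add_comm (b t (2 * _ + 1))]
  exact HasDerivAt.fun_sum fun k _ => hasDerivAt_log_map_mul_self hpos hP (hb t) hL (2 * k + 1)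

theorem hasDerivAt_log_hankelDet_shifted_div_even (hpos : ∀ s, IsPositiveDefinite (L s))
    (hP : ∀ s, IsMonicOrthogonal (L s) (P s)) (hb : ∀ s, IsSymmetricRecurrence (P s) (b s))
    (hL : ∀ k, HasDerivAt (fun s => L s (X ^ k)) (L t (X ^ (k + 2))) t) (n : ℕ) :
    HasDerivAt (fun s => log (hankelDet (fun k => L s (X ^ (2 * k + 2))) n /
      hankelDet (fun k => L s (X ^ (2 * k))) n)) (b t (2 * n)) t := by
  have hlog s := log_div (hankelDet_shifted_even_moments_pos (hpos s) (hP s) (hb s) n).ne'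
    (hankelDet_even_moments_pos (hpos s) (hP s) (hb s) n).ne'
  simp only [hlog]
  refine ((hasDerivAt_log_hankelDet_shifted_even_moments hpos hP hb hL n).fun_sub
    (hasDerivAt_log_hankelDet_even_moments hpos hP hb hL n)).congr_deriv ?_
  rw [Finset.sum_range_succ, add_sub_cancel_left]

theorem hasDerivAt_log_hankelDet_even_div_shifted (hpos : ∀ s, IsPositiveDefinite (L s))
    (hP : ∀ s, IsMonicOrthogonal (L s) (P s)) (hb : ∀ s, IsSymmetricRecurrence (P s) (b s))
    (hL : ∀ k, HasDerivAt (fun s => L s (X ^ k)) (L t (X ^ (k + 2))) t) (n : ℕ) :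
    HasDerivAt (fun s => log (hankelDet (fun k => L s (X ^ (2 * k))) (n + 1) /
      hankelDet (fun k => L s (X ^ (2 * k + 2))) n)) (b t (2 * n + 1)) t := by
  have hlog s := log_div (hankelDet_even_moments_pos (hpos s) (hP s) (hb s) (n + 1)).ne'
    (hankelDet_shifted_even_moments_pos (hpos s) (hP s) (hb s) n).ne'
  simp only [hlog]
  refine ((hasDerivAt_log_hankelDet_even_moments hpos hP hb hL (n + 1)).fun_sub
    (hasDerivAt_log_hankelDet_shifted_even_moments hpos hP hb hL n)).congr_deriv ?_
  rw [mul_add_one, Finset.sum_range_succ, add_sub_cancel_left]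

end Deformation

section Weights

theorem integrable_comp_abs {E : Type*} [NormedAddCommGroup E] {f : ℝ → E}
    (hf : IntegrableOn f (Set.Ioi 0)) : Integrable fun x => f |x| := by
  have hright : IntegrableOn (fun x => f |x|) (Set.Ici 0) :=
    (integrableOn_Ici_iff_integrableOn_Ioi).2 <|
      hf.congr_fun (fun x hx => by rw [abs_of_pos hx]) measurableSet_Ioi
  have hleft : IntegrableOn (fun x => f |x|) (Set.Iic 0) := by
    rw [← neg_zero] at hright
    simpa only [abs_neg] using hright.comp_neg_Iic
  rw [← integrableOn_univ, ← Set.Iic_union_Ici (a := (0 : ℝ))]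
  exact hleft.union hright

theorem hasDerivAt_integral_mul_exp {α : Type*} [MeasurableSpace α] {μ : Measure α} {f g : α → ℝ}
    {t : ℝ} (hf : AEStronglyMeasurable f μ) (hg : AEStronglyMeasurable g μ) (hg0 : ∀ a, 0 ≤ g a)
    (hinteg : Integrable (fun a => f a * exp (t * g a)) μ)
    (hinteg' : Integrable (fun a => f a * g a * exp ((t + 1) * g a)) μ) :
    HasDerivAt (fun s => ∫ a, f a * exp (s * g a) ∂μ) (∫ a, f a * g a * exp (t * g a) ∂μ) t := by
  have hexp (s : ℝ) : AEStronglyMeasurable (fun a => exp (s * g a)) μ :=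
    continuous_exp.comp_aestronglyMeasurable (hg.const_mul s)
  refine (hasDerivAt_integral_of_dominated_loc_of_deriv_le
    (F := fun s a => f a * exp (s * g a)) (F' := fun s a => f a * g a * exp (s * g a))
    (Metric.ball_mem_nhds t one_pos) (.of_forall fun s => hf.mul (hexp s)) hinteg
    ((hf.mul hg).mul (hexp t)) (.of_forall fun a s hs => ?_) hinteg'.norm
    (.of_forall fun a s _ => ?_)).2
  · have hst : s ≤ t + 1 := by
      rw [Metric.mem_ball, dist_eq] at hs
      linarith [le_abs_self (s - t)]
    rw [norm_mul, norm_mul _ (exp _), norm_of_nonneg (exp_pos _).le,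
      norm_of_nonneg (exp_pos _).le]
    gcongr
    exact hg0 a
  · simpa only [id, one_mul, mul_comm, mul_left_comm, mul_assoc] using
      (((hasDerivAt_id s).mul_const (g a)).exp.const_mul (f a))

variable {μ : Measure ℝ} {w : ℝ → ℝ}

theorem integrable_eval_mul (hw : ∀ k : ℕ, Integrable (fun x => x ^ k * w x) μ) (p : ℝ[X]) :
    Integrable (fun x => p.eval x * w x) μ := by
  induction p using Polynomial.induction_on' with
  | add p q hp hq => simpa only [eval_add, add_mul] using hp.fun_add hq
  | monomial k a => simpa only [eval_monomial, mul_assoc] using (hw k).const_mul a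

theorem momentFunctional_eq_integral (hw : ∀ k : ℕ, Integrable (fun x => x ^ k * w x) μ)
    (p : ℝ[X]) :
    momentFunctional (fun k => ∫ x, x ^ k * w x ∂μ) p = ∫ x, p.eval x * w x ∂μ := by
  induction p using Polynomial.induction_on' with
  | add p q hp hq =>
    simp only [map_add, hp, hq, eval_add, add_mul]
    exact (integral_add (integrable_eval_mul hw p) (integrable_eval_mul hw q)).symm
  | monomial k a =>
    simp only [← C_mul_X_pow_eq_monomial, map_C_mul, momentFunctional_X_pow, eval_C_mul, eval_pow,
      eval_X, mul_assoc, integral_const_mul]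

theorem isPositiveDefinite_momentFunctional [NullSingletonClass μ] [NeZero μ]
    (hw : ∀ k : ℕ, Integrable (fun x => x ^ k * w x) μ) (hpos : ∀ᵐ x ∂μ, 0 < w x) :
    IsPositiveDefinite (momentFunctional fun k => ∫ x, x ^ k * w x ∂μ) := by
  intro p hp
  have hroots : ∀ᵐ x ∂μ, p.eval x ≠ 0 :=
    measure_eq_zero_iff_ae_notMem.1 ((finite_setOfPred_isRoot hp).measure_zero μ)
  have hae : ∀ᵐ x ∂μ, 0 < (p * p).eval x * w x := by
    filter_upwards [hroots, hpos] with x hpx hwx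
    rw [eval_mul]
    exact mul_pos (mul_self_pos.2 hpx) hwx
  have hnonneg : 0 ≤ᵐ[μ] fun x => (p * p).eval x * w x := hae.mono fun _ hx => hx.le
  rw [momentFunctional_eq_integral hw]
  refine (integral_nonneg_of_ae hnonneg).lt_of_ne' fun hzero => NeZero.ne μ ?_
  rw [integral_eq_zero_iff_of_nonneg_ae hnonneg (integrable_eval_mul hw _)] at hzero
  rw [← ae_eq_bot, ← Filter.eventually_false_iff_eq_bot]
  filter_upwards [hzero, hae] with x hx0 hx using hx.ne' hx0

theorem isMonicOrthogonal_momentFunctional {P : ℕ → ℝ[X]}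
    (hw : ∀ k : ℕ, Integrable (fun x => x ^ k * w x) μ) (hmonic : ∀ n, (P n).Monic)
    (hdeg : ∀ n, (P n).natDegree = n)
    (horth : ∀ j k, j ≠ k → ∫ x, (P j).eval x * (P k).eval x * w x ∂μ = 0) :
    IsMonicOrthogonal (momentFunctional fun k => ∫ x, x ^ k * w x ∂μ) P where
  monic := hmonic
  natDegree_eq := hdeg
  map_mul_eq_zero {j k} hjk := by
    simpa only [momentFunctional_eq_integral hw, eval_mul] using horth j k hjk

end Weights

section Freud

variable {m : ℕ} {lam : ℝ}

theorem mul_sq_sub_pow_le (hm : 2 ≤ m) (t x : ℝ) :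
    t * x ^ 2 - x ^ (2 * m) ≤ (t + 1) ^ 2 + 1 - x ^ 2 := by
  rw [pow_mul]
  have hy : 0 ≤ x ^ 2 := sq_nonneg x
  generalize x ^ 2 = y at hy
  have hpow : y ^ 2 ≤ y ^ m + 1 := by
    rcases le_total 1 y with h | h
    · linarith [pow_le_pow_right₀ h hm]
    · linarith [pow_le_one₀ hy h (n := 2), pow_nonneg hy m]
  nlinarith [sq_nonneg (y - (t + 1)), sq_nonneg y]

theorem measurable_freudWeight (m : ℕ) (lam t : ℝ) : Measurable (freudWeight m lam t) := by
  unfold freudWeight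
  fun_prop

theorem freudWeight_pos (m : ℕ) (lam t : ℝ) {x : ℝ} (hx : x ≠ 0) : 0 < freudWeight m lam t x :=
  mul_pos (rpow_pos_of_pos (abs_pos.2 hx) _) (exp_pos _)

theorem integrable_freudWeight (hm : 2 ≤ m) (hlam : -1 < lam) (t : ℝ) :
    Integrable (freudWeight m lam t) := by
  have hgauss : Integrable fun x : ℝ => |x| ^ (2 * lam + 1) * exp (-1 * |x| ^ 2) :=
    integrable_comp_abs (integrableOn_rpow_mul_exp_neg_mul_sq one_pos (by linarith))
  refine (hgauss.const_mul (exp ((t + 1) ^ 2 + 1))).mono'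
    (measurable_freudWeight m lam t).aestronglyMeasurable (.of_forall fun x => ?_)
  rw [norm_of_nonneg (by unfold freudWeight; positivity), mul_left_comm, ← exp_add, sq_abs,
    neg_one_mul, ← sub_eq_add_neg]
  exact mul_le_mul_of_nonneg_left (exp_le_exp.2 (mul_sq_sub_pow_le hm t x)) (by positivity)

theorem abs_pow_mul_freudWeight (m k : ℕ) (lam t : ℝ) {x : ℝ} (hx : x ≠ 0) :
    |x ^ k * freudWeight m lam t x| = freudWeight m (lam + k / 2) t x := by
  have hexp : 2 * (lam + k / 2) + 1 = 2 * lam + 1 + k := by ring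
  rw [abs_mul, abs_pow, abs_of_pos (freudWeight_pos m lam t hx), freudWeight, freudWeight, hexp,
    rpow_add_natCast (abs_ne_zero.2 hx)]
  ring

theorem integrable_pow_mul_freudWeight (hm : 2 ≤ m) (hlam : -1 < lam) (k : ℕ) (t : ℝ) :
    Integrable fun x => x ^ k * freudWeight m lam t x := by
  have hlam' : -1 < lam + k / 2 := by linarith [k.cast_nonneg (α := ℝ)]
  refine (integrable_freudWeight hm hlam' t).mono'
    ((measurable_id.pow_const k).mul (measurable_freudWeight m lam t)).aestronglyMeasurable ?_
  filter_upwards [Measure.ae_ne volume 0] with x hx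
  exact (abs_pow_mul_freudWeight m k lam t hx).le

theorem hasDerivAt_freudMoment (hm : 2 ≤ m) (hlam : -1 < lam) (k : ℕ) (t : ℝ) :
    HasDerivAt (freudMoment m lam k) (freudMoment m lam (k + 2) t) t := by
  let f (x : ℝ) : ℝ := x ^ k * (|x| ^ (2 * lam + 1) * exp (-x ^ (2 * m)))
  have hf (s x : ℝ) : x ^ k * freudWeight m lam s x = f x * exp (s * x ^ 2) := by
    simp only [f, freudWeight, mul_assoc, ← exp_add, neg_add_eq_sub]
  have hf' (s x : ℝ) : x ^ (k + 2) * freudWeight m lam s x = f x * x ^ 2 * exp (s * x ^ 2) := by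
    rw [pow_add, mul_right_comm, hf, mul_right_comm]
  have hfm : Measurable f := by fun_prop
  have hinteg s := integrable_pow_mul_freudWeight hm hlam k s
  have hinteg' s := integrable_pow_mul_freudWeight hm hlam (k + 2) s
  simp only [hf] at hinteg
  simp only [hf'] at hinteg'
  unfold freudMoment
  simp only [hf, hf']
  exact hasDerivAt_integral_mul_exp hfm.aestronglyMeasurable (by fun_prop) sq_nonneg (hinteg t)
    (hinteg' (t + 1))

theorem iteratedDeriv_freudMoment_zero (hm : 2 ≤ m) (hlam : -1 < lam) (k : ℕ) :
    iteratedDeriv k (freudMoment m lam 0) = freudMoment m lam (2 * k) := by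
  induction k with
  | zero => rw [iteratedDeriv_zero, mul_zero]
  | succ k ih =>
    ext t
    rw [iteratedDeriv_succ, ih, (hasDerivAt_freudMoment hm hlam (2 * k) t).deriv, mul_add_one]

end Freud

/-- For `λ > −1`, `t ∈ ℝ` and integer `m ≥ 2`, the Hankel determinants
`𝒜_n, ℬ_n` of even moments of the generalised higher order Freud weight are the Wronskians
`𝒜_n = Wr(μ₀, μ₀′, …, μ₀^{(n−1)})`, `ℬ_n = Wr(μ₀′, μ₀″, …, μ₀^{(n)})`, and the recurrence
coefficients satisfy `β_{2n} = (d/dt) ln(ℬ_n/𝒜_n)` and `β_{2n+1} = (d/dt) ln(𝒜_{n+1}/ℬ_n)`. -/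
theorem recurrence_coefficients_wronskian (m : ℕ) (hm : 2 ≤ m) (lam : ℝ) (hlam : -1 < lam)
    (P : ℝ → ℕ → Polynomial ℝ) (β : ℝ → ℕ → ℝ)
    (hmonic : ∀ t n, (P t n).Monic) (hdeg : ∀ t n, (P t n).natDegree = n)
    (horth : ∀ t, ∀ j k, j ≠ k →
      ∫ x : ℝ, (P t j).eval x * (P t k).eval x * freudWeight m lam t x = 0)
    (hβpos : ∀ t n, 1 ≤ n → 0 < β t n)
    (hP0 : ∀ t, P t 0 = 1) (hP1 : ∀ t, P t 1 = X)
    (hrec : ∀ t n, 1 ≤ n → P t (n + 1) = X * P t n - C (β t n) * P t (n - 1)) :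
    ∀ (n : ℕ) (t : ℝ),
      hankelA m lam n t =
        Matrix.det (Matrix.of fun i j : Fin n =>
          iteratedDeriv ((i : ℕ) + (j : ℕ)) (freudMoment m lam 0) t) ∧
      hankelB m lam n t =
        Matrix.det (Matrix.of fun i j : Fin n =>
          iteratedDeriv ((i : ℕ) + (j : ℕ) + 1) (freudMoment m lam 0) t) ∧
      (1 ≤ n →
        β t (2 * n) = deriv (fun s => Real.log (hankelB m lam n s / hankelA m lam n s)) t) ∧
      β t (2 * n + 1) =
        deriv (fun s => Real.log (hankelA m lam (n + 1) s / hankelB m lam n s)) t := by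
  let L (s : ℝ) : ℝ[X] →ₗ[ℝ] ℝ := momentFunctional fun k => freudMoment m lam k s
  have hinteg s k := integrable_pow_mul_freudWeight hm hlam k s
  have hweight s : ∀ᵐ x, 0 < freudWeight m lam s x :=
    (Measure.ae_ne volume 0).mono fun _ hx => freudWeight_pos m lam s hx
  have hpos s : IsPositiveDefinite (L s) :=
    isPositiveDefinite_momentFunctional (hinteg s) (hweight s)
  have hP s : IsMonicOrthogonal (L s) (P s) :=
    isMonicOrthogonal_momentFunctional (hinteg s) (hmonic s) (hdeg s) (horth s)
  have hb s : IsSymmetricRecurrence (P s) (Function.update (β s) 0 0) :=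
    .of_three_term (hP0 s) (hP1 s) (hrec s)
  have hL t k : HasDerivAt (fun s => L s (X ^ k)) (L t (X ^ (k + 2))) t := by
    simpa only [L, momentFunctional_X_pow] using hasDerivAt_freudMoment hm hlam k t
  intro n t
  have heven := hasDerivAt_log_hankelDet_shifted_div_even hpos hP hb (hL t) n
  have hodd := hasDerivAt_log_hankelDet_even_div_shifted hpos hP hb (hL t) n
  simp only [L, momentFunctional_X_pow] at heven hodd
  refine ⟨?_, ?_, fun hn => ?_, ?_⟩
  · simp only [hankelA, iteratedDeriv_freudMoment_zero hm hlam]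
  · simp only [hankelB, iteratedDeriv_freudMoment_zero hm hlam, mul_add_one]
  · rw [← Function.update_of_ne (by omega : 2 * n ≠ 0) 0 (β t)]
    exact heven.deriv.symm
  · rw [← Function.update_of_ne (by omega : 2 * n + 1 ≠ 0) 0 (β t)]
    exact hodd.deriv.symm
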